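/- Let d > 6 be even and let G be a peanut graph of degree d. Then G has exactly n = 2d + 3 vertices, and ∑_{v ∈ V(G)} deg₂(v) = 7d − 4; equivalently, e(G²) − e(G) = (7d − 4)/2. -/

import Mathlib

open SimpleGraph

variable {V : Type*}

/-- The set of vertices at distance exactly `i` from `v`. -/
def distSet (G : SimpleGraph V) (v : V) (i : ℕ) : Set V := {u | G.dist v u = i}

/-- `deg₂ v` : the number of vertices at distance exactly 2 from `v`. -/
noncomputable def deg2 (G : SimpleGraph V) (v : V) : ℕ := (distSet G v 2).ncard

/-- `N₂'(v)` : vertices at distance 2 from `v` that are adjacent to a vertex at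
distance 3 from `v`. -/
def N2' (G : SimpleGraph V) (v : V) : Set V :=
  {u | G.dist v u = 2 ∧ ∃ w, G.dist v w = 3 ∧ G.Adj u w}

/-- The square of `G` : an edge between `u` and `v` whenever `1 ≤ d(u,v) ≤ 2`. -/
def graphSquare (G : SimpleGraph V) : SimpleGraph V where
  Adj u v := 1 ≤ G.dist u v ∧ G.dist u v ≤ 2
  symm := by
    constructor
    intro u v h
    rwa [SimpleGraph.dist_comm]
  loopless := by
    constructor
    intro v h
    simp [SimpleGraph.dist_self] at h

/-- `G` is `d`-regular : every vertex has exactly `d` neighbors. -/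
def IsRegularGraph (G : SimpleGraph V) (d : ℕ) : Prop :=
  ∀ v, (G.neighborSet v).ncard = d

/-- The vertex set of the connected component of `G - u` containing `v` :
all vertices reachable from `v` by a walk avoiding `u`. -/
def compDel (G : SimpleGraph V) (u v : V) : Set V :=
  {w | ∃ p : G.Walk v w, u ∉ p.support}

/-- A peanut graph : a connected `d`-regular graph (`d` even) partitioned into `R₁` of size
`d+1` whose induced complement is the single edge `w₁w₂`, and `R₂` of size `d+2` whose
induced complement is a star `uv₁, uv₂, uv₃` plus a perfect matching on the remaining
vertices, the only edges between the parts being `uw₁` and `uw₂`. -/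
def IsPeanut (G : SimpleGraph V) (d : ℕ) : Prop :=
  G.Connected ∧ IsRegularGraph G d ∧ Even d ∧
  ∃ (R1 R2 : Set V) (w1 w2 u v1 v2 v3 : V),
    Disjoint R1 R2 ∧ R1 ∪ R2 = Set.univ ∧
    R1.ncard = d + 1 ∧ R2.ncard = d + 2 ∧
    w1 ∈ R1 ∧ w2 ∈ R1 ∧ w1 ≠ w2 ∧
    u ∈ R2 ∧ v1 ∈ R2 ∧ v2 ∈ R2 ∧ v3 ∈ R2 ∧
    ([u, v1, v2, v3].Pairwise (· ≠ ·)) ∧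
    (∀ a ∈ R1, ∀ b ∈ R1, a ≠ b → (¬ G.Adj a b ↔ ({a, b} : Set V) = {w1, w2})) ∧
    (∃ m : V → V,
      (∀ x ∈ R2 \ {u, v1, v2, v3}, m x ∈ R2 \ {u, v1, v2, v3} ∧ m x ≠ x ∧ m (m x) = x) ∧
      (∀ a ∈ R2, ∀ b ∈ R2, a ≠ b →
        (¬ G.Adj a b ↔ (({a, b} : Set V) = {u, v1} ∨ ({a, b} : Set V) = {u, v2} ∨
          ({a, b} : Set V) = {u, v3} ∨ (a ∈ R2 \ {u, v1, v2, v3} ∧ b = m a))))) ∧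
    (∀ a ∈ R1, ∀ b ∈ R2, (G.Adj a b ↔ (b = u ∧ (a = w1 ∨ a = w2))))

theorem aux_dist2 {V : Type*} (G : SimpleGraph V) (hc : G.Connected) (a b : V) :
    G.dist a b = 2 ↔ a ≠ b ∧ ¬ G.Adj a b ∧ ∃ c, G.Adj a c ∧ G.Adj c b := by
  constructor
  · intro h
    refine ⟨?_, ?_, ?_⟩
    · rintro rfl
      simp at h
    · intro h'
      rw [SimpleGraph.dist_eq_one_iff_adj.mpr h'] at h
      omega
    · obtain ⟨p, hp⟩ := hc.exists_walk_length_eq_dist a b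
      rw [h] at hp
      cases p with
      | nil => simp at hp
      | cons h1 q =>
        cases q with
        | nil => simp at hp
        | cons h2 r =>
          cases r with
          | nil => exact ⟨_, h1, h2⟩
          | cons h3 s => simp at hp
  · rintro ⟨h1, h2, c, h3, h4⟩
    have hle : G.dist a b ≤ 2 :=
      SimpleGraph.dist_le (SimpleGraph.Walk.cons h3 (SimpleGraph.Walk.cons h4 .nil))
    have h0 : G.dist a b ≠ 0 := by
      intro h
      exact h1 (hc.dist_eq_zero_iff.mp h)
    have h1' : G.dist a b ≠ 1 := by
      intro h
      exact h2 (SimpleGraph.dist_eq_one_iff_adj.mp h)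
    omega

theorem aux_square {V : Type*} [Fintype V] (G : SimpleGraph V) :
    2 * (graphSquare G).edgeSet.ncard = 2 * G.edgeSet.ncard + ∑ v : V, deg2 G v := by
  classical
  have e : ∀ H : SimpleGraph V, 2 * H.edgeSet.ncard = ∑ v : V, (H.neighborSet v).ncard := by
    intro H
    have h := H.sum_degrees_eq_twice_card_edges
    rw [← SimpleGraph.coe_edgeFinset, Set.ncard_coe_finset, ← h]
    refine Finset.sum_congr rfl fun v _ => ?_
    rw [Set.ncard_eq_toFinset_card', ← SimpleGraph.card_neighborFinset_eq_degree]
    rfl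
  rw [e, e, ← Finset.sum_add_distrib]
  refine Finset.sum_congr rfl fun v _ => ?_
  unfold deg2
  rw [← Set.ncard_union_eq _ (Set.toFinite _) (Set.toFinite _)]
  · congr 1
    ext x
    simp only [SimpleGraph.mem_neighborSet, graphSquare, distSet, Set.mem_union, Set.mem_ofPred_eq,
      ← SimpleGraph.dist_eq_one_iff_adj]
    omega
  · rw [Set.disjoint_left]
    intro x hx hx'
    simp only [SimpleGraph.mem_neighborSet, distSet, Set.mem_ofPred_eq,
      ← SimpleGraph.dist_eq_one_iff_adj] at hx hx'
    omega

set_option maxHeartbeats 4000000 in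
theorem stmt16 {V : Type*} [Fintype V] (G : SimpleGraph V) (d : ℕ) (hd : 6 < d)
    (heven : Even d) (hpeanut : IsPeanut G d) :
    Fintype.card V = 2 * d + 3 ∧
      ((∑ v : V, deg2 G v) = 7 * d - 4) ∧
      2 * (graphSquare G).edgeSet.ncard = 2 * G.edgeSet.ncard + (7 * d - 4) := by
  classical
  obtain ⟨hc, -, -, R1, R2, w1, w2, u, v1, v2, v3, hdis, hun, hR1, hR2, hw1, hw2, hw, hu,
    hv1, hv2, hv3, hpw, hA1, ⟨m, hm, hA2⟩, hA12⟩ := hpeanut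
  have hdd : ∀ x, x ∈ R1 → x ∈ R2 → False := fun x h h' => Set.disjoint_left.mp hdis h h'
  have hcov : ∀ x, x ∈ R1 ∨ x ∈ R2 := fun x => by
    have : x ∈ R1 ∪ R2 := hun ▸ Set.mem_univ x
    exact this
  simp only [List.pairwise_cons, List.mem_cons, List.not_mem_nil, or_false, forall_eq_or_imp,
    forall_eq, false_imp_iff, implies_true, List.Pairwise.nil, and_true] at hpw
  obtain ⟨⟨huv1, huv2, huv3⟩, ⟨hv12, hv13⟩, hv23⟩ := hpw
  simp only [Set.pair_eq_pair_iff] at hA1 hA2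
  obtain ⟨A, hA⟩ : ∃ A : Finset V, ∀ x, x ∈ A ↔ x ∈ R1 ∧ x ≠ w1 ∧ x ≠ w2 :=
    ⟨Finset.univ.filter fun x => x ∈ R1 ∧ x ≠ w1 ∧ x ≠ w2, by simp⟩
  obtain ⟨M, hM⟩ : ∃ M : Finset V, ∀ x, x ∈ M ↔ x ∈ R2 ∧ x ≠ u ∧ x ≠ v1 ∧ x ≠ v2 ∧ x ≠ v3 :=
    ⟨Finset.univ.filter fun x => x ∈ R2 ∧ x ≠ u ∧ x ≠ v1 ∧ x ≠ v2 ∧ x ≠ v3, by simp⟩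
  have hMs : ∀ x, x ∈ R2 \ {u, v1, v2, v3} ↔ x ∈ M := by
    intro x; rw [hM]; simp
  simp only [hMs] at hm hA2
  have hwu1 : w1 ≠ u := by rintro rfl; exact hdd _ hw1 hu
  have hwu2 : w2 ≠ u := by rintro rfl; exact hdd _ hw2 hu
  have cA : A.card = d - 1 := by
    have : R1 = ((insert w1 (insert w2 A) : Finset V) : Set V) := by
      ext x; simp only [Finset.coe_insert, Set.mem_insert_iff, Finset.mem_coe, hA]; grind
    rw [this, Set.ncard_coe_finset, Finset.card_insert_of_notMem (by grind),
      Finset.card_insert_of_notMem (by grind)] at hR1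
    omega
  have cM : M.card = d - 2 := by
    have : R2 = ((insert u (insert v1 (insert v2 (insert v3 M))) : Finset V) : Set V) := by
      ext x; simp only [Finset.coe_insert, Set.mem_insert_iff, Finset.mem_coe, hM]; grind
    rw [this, Set.ncard_coe_finset, Finset.card_insert_of_notMem (by grind),
      Finset.card_insert_of_notMem (by grind), Finset.card_insert_of_notMem (by grind),
      Finset.card_insert_of_notMem (by grind)] at hR2
    omega
  obtain ⟨m0, hm0⟩ : ∃ x, x ∈ M := by
    apply Finset.card_pos.mp; omega
  have huniv : (Finset.univ : Finset V) =
      insert w1 (insert w2 (insert u (insert v1 (insert v2 (insert v3 (A ∪ M)))))) := by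
    ext x
    simp only [Finset.mem_univ, Finset.mem_insert, Finset.mem_union, hA, hM, true_iff]
    have := hcov x
    grind
  have hAM : Disjoint A M := by
    rw [Finset.disjoint_left]; grind
  have n0 : w1 ∉ (insert w2 (insert u (insert v1 (insert v2 (insert v3 (A ∪ M)))))) := by
    clear hm huniv hm0 hcov hAM
    simp only [Finset.mem_insert, Finset.mem_union, hA, hM]
    grind
  have n1 : w2 ∉ (insert u (insert v1 (insert v2 (insert v3 (A ∪ M))))) := by
    clear hm huniv hm0 hcov hAM
    simp only [Finset.mem_insert, Finset.mem_union, hA, hM]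
    grind
  have n2 : u ∉ (insert v1 (insert v2 (insert v3 (A ∪ M)))) := by
    clear hm huniv hm0 hcov hAM
    simp only [Finset.mem_insert, Finset.mem_union, hA, hM]
    grind
  have n3 : v1 ∉ (insert v2 (insert v3 (A ∪ M))) := by
    clear hm huniv hm0 hcov hAM
    simp only [Finset.mem_insert, Finset.mem_union, hA, hM]
    grind
  have n4 : v2 ∉ (insert v3 (A ∪ M)) := by
    clear hm huniv hm0 hcov hAM
    simp only [Finset.mem_insert, Finset.mem_union, hA, hM]
    grind
  have n5 : v3 ∉ (A ∪ M) := by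
    clear hm huniv hm0 hcov hAM
    simp only [Finset.mem_insert, Finset.mem_union, hA, hM]
    grind
  -- adjacency
  have a11 : ∀ a b, a ∈ R1 → b ∈ R1 →
      (G.Adj a b ↔ a ≠ b ∧ ¬ (a = w1 ∧ b = w2) ∧ ¬ (a = w2 ∧ b = w1)) := by
    intro a b ha hb
    by_cases hab : a = b
    · subst hab; simp
    · have h := hA1 a ha b hb hab
      clear * - h hab
      grind
  have a22 : ∀ a b, a ∈ R2 → b ∈ R2 →
      (G.Adj a b ↔ a ≠ b ∧ ¬ (a = u ∧ (b = v1 ∨ b = v2 ∨ b = v3)) ∧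
        ¬ (b = u ∧ (a = v1 ∨ a = v2 ∨ a = v3)) ∧ ¬ (a ∈ M ∧ b = m a)) := by
    intro a b ha hb
    by_cases hab : a = b
    · subst hab; simp
    · have h := hA2 a ha b hb hab
      clear * - h hab
      grind
  have a12 : ∀ a b, a ∈ R1 → b ∈ R2 → (G.Adj a b ↔ (b = u ∧ (a = w1 ∨ a = w2))) :=
    fun a b ha hb => hA12 a ha b hb
  have a21 : ∀ a b, a ∈ R2 → b ∈ R1 → (G.Adj a b ↔ (a = u ∧ (b = w1 ∨ b = w2))) :=
    fun a b ha hb => by rw [G.adj_comm]; exact hA12 b hb a ha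
  clear hA1 hA2 hA12 hMs hun hdis
  have key : ∀ (v : V) (S : Finset V),
      (∀ x, x ∈ S → v ≠ x ∧ ¬ G.Adj v x ∧ ∃ c, G.Adj v c ∧ G.Adj c x) →
      (∀ x, x ∉ S → v ≠ x → ¬ G.Adj v x → ∀ c, G.Adj v c → ¬ G.Adj c x) →
      deg2 G v = S.card := by
    intro v S h1 h2
    unfold deg2
    rw [← Set.ncard_coe_finset]
    congr 1
    ext x
    simp only [distSet, Set.mem_ofPred_eq, aux_dist2 G hc, Finset.mem_coe]
    constructor
    · rintro ⟨h3, h4, c, h5, h6⟩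
      by_contra h
      exact h2 x h h3 h4 c h5 h6
    · exact h1 x
  have dA : ∀ x ∈ A, deg2 G x = 1 := by
    clear huniv hAM n0 n1 n2 n3 n4 n5 hR1 hR2
    intro x hx
    rw [key x {u}]
    · simp
    · intro y hy
      refine ⟨by grind, by grind, w1, by grind, by grind⟩
    · intro y hy h1 h2 c h3 h4
      have ey := hcov y
      have ec := hcov c
      have a110 := a11 x y
      have a120 := a12 x y
      have a210 := a21 x y
      have a220 := a22 x y
      have a111 := a11 x c
      have a121 := a12 x c
      have a211 := a21 x c
      have a221 := a22 x c
      have a112 := a11 c y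
      have a122 := a12 c y
      have a212 := a21 c y
      have a222 := a22 c y
      clear a11 a12 a21 a22 hcov hm key hm0
      grind
  have dw1 : deg2 G w1 = d - 1 := by
    clear huniv hAM n0 n1 n2 n3 n4 n5 hR1 hR2 dA
    rw [key w1 (insert w2 M)]
    · rw [Finset.card_insert_of_notMem (by grind)]; omega
    · intro y hy
      refine ⟨by grind, by grind, u, by grind, by grind⟩
    · intro y hy h1 h2 c h3 h4
      have ey := hcov y
      have ec := hcov c
      have a110 := a11 w1 y
      have a120 := a12 w1 y
      have a210 := a21 w1 y
      have a220 := a22 w1 y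
      have a111 := a11 w1 c
      have a121 := a12 w1 c
      have a211 := a21 w1 c
      have a221 := a22 w1 c
      have a112 := a11 c y
      have a122 := a12 c y
      have a212 := a21 c y
      have a222 := a22 c y
      clear a11 a12 a21 a22 hcov hm key hm0
      grind
  have dw2 : deg2 G w2 = d - 1 := by
    clear huniv hAM n0 n1 n2 n3 n4 n5 hR1 hR2 dA dw1
    rw [key w2 (insert w1 M)]
    · rw [Finset.card_insert_of_notMem (by grind)]; omega
    · intro y hy
      refine ⟨by grind, by grind, u, by grind, by grind⟩
    · intro y hy h1 h2 c h3 h4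
      have ey := hcov y
      have ec := hcov c
      have a110 := a11 w2 y
      have a120 := a12 w2 y
      have a210 := a21 w2 y
      have a220 := a22 w2 y
      have a111 := a11 w2 c
      have a121 := a12 w2 c
      have a211 := a21 w2 c
      have a221 := a22 w2 c
      have a112 := a11 c y
      have a122 := a12 c y
      have a212 := a21 c y
      have a222 := a22 c y
      clear a11 a12 a21 a22 hcov hm key hm0
      grind
  have du : deg2 G u = d + 2 := by
    clear huniv hAM n0 n1 n2 n3 n4 n5 hR1 hR2 dA dw1 dw2
    rw [key u (insert v1 (insert v2 (insert v3 A)))]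
    · rw [Finset.card_insert_of_notMem (by grind), Finset.card_insert_of_notMem (by grind),
        Finset.card_insert_of_notMem (by grind)]; omega
    · intro y hy
      have := hcov y
      by_cases hy1 : y ∈ A
      · exact ⟨by grind, by grind, w1, by grind, by grind⟩
      · exact ⟨by grind, by grind, m0, by grind, by grind⟩
    · intro y hy h1 h2 c h3 h4
      have ey := hcov y
      have ec := hcov c
      have a110 := a11 u y
      have a120 := a12 u y
      have a210 := a21 u y
      have a220 := a22 u y
      have a111 := a11 u c
      have a121 := a12 u c
      have a211 := a21 u c
      have a221 := a22 u c
      have a112 := a11 c y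
      have a122 := a12 c y
      have a212 := a21 c y
      have a222 := a22 c y
      clear a11 a12 a21 a22 hcov hm key hm0
      grind
  have dv : ∀ x, x = v1 ∨ x = v2 ∨ x = v3 → deg2 G x = 1 := by
    clear huniv hAM n0 n1 n2 n3 n4 n5 hR1 hR2 dA dw1 dw2 du
    intro x hx
    have hxR : x ∈ R2 := by grind
    rw [key x {u}]
    · simp
    · intro y hy
      refine ⟨by grind, by grind, m0, by grind, by grind⟩
    · intro y hy h1 h2 c h3 h4
      have ey := hcov y
      have ec := hcov c
      have a110 := a11 x y
      have a120 := a12 x y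
      have a210 := a21 x y
      have a220 := a22 x y
      have a111 := a11 x c
      have a121 := a12 x c
      have a211 := a21 x c
      have a221 := a22 x c
      have a112 := a11 c y
      have a122 := a12 c y
      have a212 := a21 c y
      have a222 := a22 c y
      clear a11 a12 a21 a22 hcov hm key hm0
      grind
  have dM : ∀ x ∈ M, deg2 G x = 3 := by
    clear huniv hAM n0 n1 n2 n3 n4 n5 hR1 hR2 dA dw1 dw2 du dv
    intro x hx
    have := hm x hx
    rw [key x {m x, w1, w2}]
    · rw [Finset.card_insert_of_notMem (by grind), Finset.card_insert_of_notMem (by grind)]; simp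
    · intro y hy
      by_cases hy1 : y ∈ R2
      · exact ⟨by grind, by grind, v1, by grind, by grind⟩
      · exact ⟨by grind, by grind, u, by grind, by grind⟩
    · intro y hy h1 h2 c h3 h4
      have ey := hcov y
      have ec := hcov c
      have a110 := a11 x y
      have a120 := a12 x y
      have a210 := a21 x y
      have a220 := a22 x y
      have a111 := a11 x c
      have a121 := a12 x c
      have a211 := a21 x c
      have a221 := a22 x c
      have a112 := a11 c y
      have a122 := a12 c y
      have a212 := a21 c y
      have a222 := a22 c y
      clear a11 a12 a21 a22 hcov hm key hm0
      grind
  have hsum : (∑ v : V, deg2 G v) = 7 * d - 4 := by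
    rw [huniv, Finset.sum_insert n0, Finset.sum_insert n1,
      Finset.sum_insert n2, Finset.sum_insert n3, Finset.sum_insert n4,
      Finset.sum_insert n5, Finset.sum_union hAM, Finset.sum_congr rfl dA,
      Finset.sum_congr rfl dM, dw1, dw2, du, dv v1 (by simp), dv v2 (by simp), dv v3 (by simp)]
    simp only [Finset.sum_const, smul_eq_mul, cA, cM]
    omega
  refine ⟨?_, hsum, ?_⟩
  · rw [← Finset.card_univ, huniv, Finset.card_insert_of_notMem n0,
      Finset.card_insert_of_notMem n1, Finset.card_insert_of_notMem n2,
      Finset.card_insert_of_notMem n3, Finset.card_insert_of_notMem n4,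
      Finset.card_insert_of_notMem n5, Finset.card_union_of_disjoint hAM]
    omega
  · rw [aux_square, hsum]
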